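/- arXiv:0712.2545 — 2 statements merged into one kernel-verified Lean document; each statement's English description precedes it below -/
import Mathlib

section
/- The real number arctan(4/3)/π is irrational. -/
/-- `arctan(4/3)/π` is irrational. -/
theorem arctan_four_thirds_div_pi_irrational :
    Irrational (Real.arctan (4 / 3) / Real.pi) := by
  rintro ⟨r, hr⟩
  have hcos : Real.cos (Real.arctan (4 / 3)) = 3 / 5 := by
    rw [Real.cos_arctan, show (1 + (4 / 3 : ℝ) ^ 2) = (5 / 3) ^ 2 by norm_num,
      Real.sqrt_sq (by norm_num)]
    norm_num
  have h := niven (θ := Real.arctan (4 / 3))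
    ⟨r, by rw [hr]; field_simp⟩ ⟨3 / 5, by rw [hcos]; norm_num⟩
  rw [hcos] at h
  norm_num at h
end

section
/- Let E be a finite-dimensional complex inner product space, let t be a positive integer, let U_1, …, U_t and V_1, …, V_t be unitary operators on E with ‖U_τ − V_τ‖ ≤ ε for every τ (operator norm), let P : E → E be an orthogonal projection, and let ψ ∈ E be a unit vector. Then |‖P(U_t⋯U_1 ψ)‖² − ‖P(V_t⋯V_1 ψ)‖²| ≤ 2·t·ε. -/
open scoped InnerProductSpace

theorem aux_norm_prod {E : Type*} [NormedAddCommGroup E] [InnerProductSpace ℂ E]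
    (t : ℕ) : ∀ (U : Fin t → (E →L[ℂ] E)) (_ : ∀ τ v, ‖U τ v‖ = ‖v‖) (ψ : E),
    ‖(List.ofFn U).reverse.prod ψ‖ = ‖ψ‖ := by
  induction t with
  | zero => intro U _ ψ; simp
  | succ n ih =>
    intro U hU ψ
    rw [List.ofFn_succ, List.reverse_cons, List.prod_append, List.prod_singleton,
      ContinuousLinearMap.mul_apply, ih _ (fun τ v => hU _ v), hU]

theorem aux_dist_prod {E : Type*} [NormedAddCommGroup E] [InnerProductSpace ℂ E] (ε : ℝ)
    (t : ℕ) : ∀ (U V : Fin t → (E →L[ℂ] E)) (_ : ∀ τ v, ‖U τ v‖ = ‖v‖)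
    (_ : ∀ τ v, ‖V τ v‖ = ‖v‖) (_ : ∀ τ, ‖U τ - V τ‖ ≤ ε) (ψ φ : E),
    ‖(List.ofFn U).reverse.prod ψ - (List.ofFn V).reverse.prod φ‖ ≤
      ‖ψ - φ‖ + t * ε * ‖ψ‖ := by
  induction t with
  | zero => intro U V _ _ _ ψ φ; simp
  | succ n ih =>
    intro U V hU hV hUV ψ φ
    simp only [List.ofFn_succ, List.reverse_cons, List.prod_append, List.prod_singleton,
      ContinuousLinearMap.mul_apply]
    have h1 := ih (fun i => U i.succ) (fun i => V i.succ) (fun τ v => hU _ v)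
      (fun τ v => hV _ v) (fun τ => hUV _) (U 0 ψ) (V 0 φ)
    have h2 : U 0 ψ - V 0 φ = (U 0 - V 0) ψ + V 0 (ψ - φ) := by simp
    have h3 : ‖U 0 ψ - V 0 φ‖ ≤ ε * ‖ψ‖ + ‖ψ - φ‖ := by
      rw [h2]
      refine (norm_add_le _ _).trans ?_
      rw [hV]
      gcongr
      exact (U 0 - V 0).le_of_opNorm_le (hUV 0) ψ
    rw [hU] at h1
    push_cast
    linarith

/-- Approximating each gate of a time-`t` quantum evolution to within `ε` changes any
measurement probability by at most `2·t·ε`: if `U_τ`, `V_τ` are unitary operators on a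
finite-dimensional complex inner product space with `‖U_τ − V_τ‖ ≤ ε` for every `τ`, `P` is
an orthogonal projection, and `ψ` is a unit vector, then
`|‖P(U_t⋯U_1 ψ)‖² − ‖P(V_t⋯V_1 ψ)‖²| ≤ 2·t·ε`. -/
theorem acceptance_prob_stable_product {E : Type*} [NormedAddCommGroup E]
    [InnerProductSpace ℂ E] [FiniteDimensional ℂ E]
    (t : ℕ) (ht : 0 < t) (ε : ℝ)
    (U V : Fin t → (E →L[ℂ] E))
    (hU : ∀ τ, U τ ∈ unitary (E →L[ℂ] E)) (hV : ∀ τ, V τ ∈ unitary (E →L[ℂ] E))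
    (hUV : ∀ τ, ‖U τ - V τ‖ ≤ ε)
    (P : E →L[ℂ] E)
    (hidem : ∀ v : E, P (P v) = P v)
    (hsa : ∀ v w : E, ⟪P v, w⟫_ℂ = ⟪v, P w⟫_ℂ)
    (ψ : E) (hψ : ‖ψ‖ = 1) :
    |‖P ((List.ofFn U).reverse.prod ψ)‖ ^ 2 - ‖P ((List.ofFn V).reverse.prod ψ)‖ ^ 2| ≤
      2 * t * ε := by
  have key : ∀ W : E →L[ℂ] E, W ∈ unitary (E →L[ℂ] E) → ∀ v, ‖W v‖ = ‖v‖ := by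
    intro W hW v
    have : CompleteSpace E := FiniteDimensional.complete ℂ E
    exact ContinuousLinearMap.norm_map_of_mem_unitary hW v
  have hP : ∀ v, ‖P v‖ ≤ ‖v‖ := by
    intro v
    have h1 : ‖P v‖ * ‖P v‖ ≤ ‖v‖ * ‖P v‖ := by
      have h2 : ⟪P v, P v⟫_ℂ = ⟪v, P v⟫_ℂ := by rw [hsa, hidem]
      calc ‖P v‖ * ‖P v‖ = ‖⟪P v, P v⟫_ℂ‖ := by
            rw [inner_self_eq_norm_sq_to_K]; simp [sq]
        _ = ‖⟪v, P v⟫_ℂ‖ := by rw [h2]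
        _ ≤ _ := norm_inner_le_norm _ _
    rcases (norm_nonneg (P v)).eq_or_lt with h | h
    · rw [← h]; exact norm_nonneg v
    · exact le_of_mul_le_mul_right h1 h
  have hd := aux_dist_prod ε t U V (fun τ => key _ (hU τ)) (fun τ => key _ (hV τ)) hUV ψ ψ
  have hx := aux_norm_prod t U (fun τ => key _ (hU τ)) ψ
  have hy := aux_norm_prod t V (fun τ => key _ (hV τ)) ψ
  generalize (List.ofFn U).reverse.prod ψ = x at *
  generalize (List.ofFn V).reverse.prod ψ = y at *
  rw [sub_self, norm_zero, hψ, zero_add, mul_one] at hd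
  have h1 : |‖P x‖ - ‖P y‖| ≤ t * ε := by
    refine (abs_norm_sub_norm_le _ _).trans ?_
    rw [← map_sub]
    exact (hP _).trans hd
  have hx' := hP x
  have hy' := hP y
  have h2 : |‖P x‖ + ‖P y‖| ≤ 2 := by
    rw [abs_of_nonneg (by positivity)]; linarith
  rw [sq_sub_sq, abs_mul, mul_assoc]
  exact mul_le_mul h2 h1 (abs_nonneg _) (by norm_num)
end
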